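/- arXiv:1804.09527 — 3 statements merged into one kernel-verified Lean document; each statement's English description precedes it below -/
import Mathlib

section
/- Let R be a Dedekind domain whose ideal class group is 2-torsion, i.e., every element of the class group has order dividing 2. Let I and I' be nonzero ideals of R whose classes in the ideal class group are distinct. Then the endomorphism algebras End_R(R ⊕ I) and End_R(R ⊕ I') are not isomorphic as R-algebras. -/
/-- The determinant form on `R × I`. -/
def omegaForm {R : Type*} [CommRing R] (I : Ideal R) : (R × ↥I) →ₗ[R] (R × ↥I) →ₗ[R] R :=
  LinearMap.mk₂ R (fun m n => m.1 * (n.2 : R) - n.1 * (m.2 : R))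
    (by intro a b c; simp; ring) (by intro a b c; simp; ring)
    (by intro a b c; simp; ring) (by intro a b c; simp; ring)

theorem omegaForm_apply {R : Type*} [CommRing R] (I : Ideal R) (m n : R × ↥I) :
    omegaForm I m n = m.1 * (n.2 : R) - n.1 * (m.2 : R) := rfl

theorem omegaForm_cramer {R : Type*} [CommRing R] (I : Ideal R) (x y z : R × ↥I) :
    omegaForm I x y • z = omegaForm I z y • x - omegaForm I z x • y := by
  ext <;> simp [omegaForm_apply] <;> ring

theorem omegaForm_plucker {R : Type*} [CommRing R] (I : Ideal R) (m m' x y : R × ↥I) :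
    omegaForm I m x * omegaForm I m' y =
      omegaForm I m m' * omegaForm I x y + omegaForm I m y * omegaForm I m' x := by
  simp only [omegaForm_apply]; ring

theorem omegaForm_mem {R : Type*} [CommRing R] (I : Ideal R) (x y : R × ↥I) :
    omegaForm I x y ∈ I := by
  rw [omegaForm_apply]
  exact I.sub_mem (I.mul_mem_left _ y.2.2) (I.mul_mem_left _ x.2.2)

theorem omegaForm_self_zero {R : Type*} [CommRing R] [IsDomain R] (I : Ideal R)
    {J J' : Submodule R (R × ↥I)} (h : Disjoint J J') (hJ' : J' ≠ ⊥)
    {x y : R × ↥I} (hx : x ∈ J) (hy : y ∈ J) : omegaForm I x y = 0 := by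
  by_contra hne
  obtain ⟨z, hz, hz0⟩ := Submodule.exists_mem_ne_zero_of_ne_bot hJ'
  have h1 : omegaForm I x y • z ∈ J := by
    rw [omegaForm_cramer]
    exact J.sub_mem (J.smul_mem _ hx) (J.smul_mem _ hy)
  have h2 := Submodule.disjoint_def.1 h _ h1 (J'.smul_mem _ hz)
  rcases smul_eq_zero.1 h2 with h3 | h3
  · exact hne h3
  · exact hz0 h3

theorem omegaForm_ne_zero {R : Type*} [CommRing R] [IsDomain R] (I : Ideal R) (hI : I ≠ 0)
    {J J' : Submodule R (R × ↥I)} (h : Disjoint J J')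
    {x y : R × ↥I} (hx : x ∈ J) (hy : y ∈ J') (hx0 : x ≠ 0) (hy0 : y ≠ 0) :
    omegaForm I x y ≠ 0 := by
  intro h0
  have key : ∀ z, omegaForm I z y = 0 := by
    intro z
    have h1 := omegaForm_cramer I x y z
    rw [h0, zero_smul, eq_comm, sub_eq_zero] at h1
    have h2 := Submodule.disjoint_def.1 h _ (J.smul_mem _ hx)
      (h1 ▸ J'.smul_mem _ hy)
    exact (smul_eq_zero.1 h2).resolve_right hx0
  obtain ⟨i, hi, hi0⟩ := Submodule.exists_mem_ne_zero_of_ne_bot hI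
  have k1 := key (1, 0)
  have k2 := key (0, ⟨i, hi⟩)
  simp [omegaForm_apply] at k1 k2
  apply hy0
  ext
  · simpa using k2.resolve_right hi0
  · simpa using k1

theorem omegaForm_restrict_inj {R : Type*} [CommRing R] [IsDomain R] (I : Ideal R) (hI : I ≠ 0)
    {J J' : Submodule R (R × ↥I)} (h : Disjoint J J')
    {m : R × ↥I} (hm : m ∈ J') (hm0 : m ≠ 0) :
    Function.Injective ((omegaForm I m).comp J.subtype) := by
  rw [← LinearMap.ker_eq_bot, LinearMap.ker_eq_bot']
  rintro ⟨x, hx⟩ h0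
  by_contra hx0
  exact omegaForm_ne_zero I hI h.symm hm hx hm0 (fun h => hx0 (by simpa using h)) h0

theorem steinitz_aux {R : Type*} [CommRing R] [IsDomain R] [IsDedekindDomain R]
    (I : Ideal R) (hI : I ≠ 0) (J J' : Submodule R (R × ↥I)) (h : IsCompl J J')
    (hJ : J ≠ ⊥) (hJ' : J' ≠ ⊥) :
    ∃ (A B : Ideal R) (hA : A ≠ 0) (hB : B ≠ 0),
      Nonempty (J ≃ₗ[R] A) ∧ Nonempty (J' ≃ₗ[R] B) ∧
      ClassGroup.mk0 ⟨A, mem_nonZeroDivisors_of_ne_zero hA⟩ *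
        ClassGroup.mk0 ⟨B, mem_nonZeroDivisors_of_ne_zero hB⟩ =
        ClassGroup.mk0 ⟨I, mem_nonZeroDivisors_of_ne_zero hI⟩ := by
  obtain ⟨m', hm', hm'0⟩ := Submodule.exists_mem_ne_zero_of_ne_bot hJ
  obtain ⟨m, hm, hm0⟩ := Submodule.exists_mem_ne_zero_of_ne_bot hJ'
  have hd : omegaForm I m m' ≠ 0 := omegaForm_ne_zero I hI h.disjoint.symm hm hm' hm0 hm'0
  have hd' : omegaForm I m' m ≠ 0 := omegaForm_ne_zero I hI h.disjoint hm' hm hm'0 hm0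
  have zJ : ∀ {x y}, x ∈ J → y ∈ J → omegaForm I x y = 0 :=
    fun hx hy => omegaForm_self_zero I h.disjoint hJ' hx hy
  have zJ' : ∀ {x y}, x ∈ J' → y ∈ J' → omegaForm I x y = 0 :=
    fun hx hy => omegaForm_self_zero I h.disjoint.symm hJ hx hy
  let A : Ideal R := LinearMap.range ((omegaForm I m).comp J.subtype)
  let B : Ideal R := LinearMap.range ((omegaForm I m').comp J'.subtype)
  have memA : ∀ {x}, x ∈ J → omegaForm I m x ∈ A := fun {x} hx => ⟨⟨x, hx⟩, rfl⟩
  have memB : ∀ {x}, x ∈ J' → omegaForm I m' x ∈ B := fun {x} hx => ⟨⟨x, hx⟩, rfl⟩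
  have hA : A ≠ 0 := fun h0 => hd (by have := memA hm'; rw [h0] at this; simpa using this)
  have hB : B ≠ 0 := fun h0 => hd' (by have := memB hm; rw [h0] at this; simpa using this)
  refine ⟨A, B, hA, hB, ⟨LinearEquiv.ofInjective _ (omegaForm_restrict_inj I hI h.disjoint hm hm0)⟩,
    ⟨LinearEquiv.ofInjective _ (omegaForm_restrict_inj I hI h.disjoint.symm hm' hm'0)⟩, ?_⟩
  have pl : ∀ {x y}, x ∈ J → y ∈ J' →
      omegaForm I m x * omegaForm I m' y = omegaForm I m m' * omegaForm I x y := by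
    intro x y hx hy
    rw [omegaForm_plucker, zJ' hm hy]; simp
  have hprod : A * B = Ideal.span {omegaForm I m m'} * I := by
    apply le_antisymm
    · rw [Ideal.mul_le]
      rintro _ ⟨⟨x, hx⟩, rfl⟩ _ ⟨⟨y, hy⟩, rfl⟩
      change omegaForm I m x * omegaForm I m' y ∈ _
      rw [pl hx hy]
      exact Ideal.mul_mem_mul (Ideal.mem_span_singleton_self _) (omegaForm_mem I x y)
    · rw [Ideal.span_singleton_mul_le_iff]
      intro i hi
      have dec : ∀ z : R × ↥I, ∃ x ∈ J, ∃ y ∈ J', x + y = z := fun z =>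
        Submodule.mem_sup.1 (h.sup_eq_top ▸ Submodule.mem_top)
      obtain ⟨x, hx, y, hy, e1⟩ := dec (1, 0)
      obtain ⟨x', hx', y', hy', e2⟩ := dec (0, ⟨i, hi⟩)
      have hanti : omegaForm I y x' = - omegaForm I x' y := by
        simp only [omegaForm_apply]; ring
      have e3 : i = omegaForm I x y' - omegaForm I x' y := by
        have : i = omegaForm I (1, 0) (0, ⟨i, hi⟩) := by simp [omegaForm_apply]
        rw [this, ← e1, ← e2]
        simp only [map_add, LinearMap.add_apply]
        rw [zJ hx hx', zJ' hy hy', hanti]; ring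
      rw [e3, mul_sub, ← pl hx hy', ← pl hx' hy]
      exact Ideal.sub_mem _ (Ideal.mul_mem_mul (memA hx) (memB hy'))
        (Ideal.mul_mem_mul (memA hx') (memB hy))
  rw [← map_mul, ClassGroup.mk0_eq_mk0_iff]
  refine ⟨1, omegaForm I m m', one_ne_zero, hd, ?_⟩
  simpa using hprod

theorem hom_class_aux {R : Type*} [CommRing R] [IsDomain R] [IsDedekindDomain R]
    (I A B : Ideal R) (hI : I ≠ 0) (hA : A ≠ 0) (hB : B ≠ 0)
    (e : I ≃ₗ[R] (A →ₗ[R] B)) :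
    ClassGroup.mk0 ⟨I, mem_nonZeroDivisors_of_ne_zero hI⟩ *
      ClassGroup.mk0 ⟨A, mem_nonZeroDivisors_of_ne_zero hA⟩ =
        ClassGroup.mk0 ⟨B, mem_nonZeroDivisors_of_ne_zero hB⟩ := by
  obtain ⟨i0, hi0, hi00⟩ := Submodule.exists_mem_ne_zero_of_ne_bot hI
  obtain ⟨a0, ha0, ha00⟩ := Submodule.exists_mem_ne_zero_of_ne_bot hA
  have hA1 : ∀ (g : A →ₗ[R] B) (a a' : A), (a : R) * (g a' : R) = a' * g a := by
    intro g a a'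
    have : (a : R) • a' = (a' : R) • a := by ext; simp [mul_comm]
    have := congrArg (fun t => ((g t : B) : R)) this
    simpa using this
  have hI1 : ∀ (i j : I) (a : A), (i : R) * (e j a : R) = j * e i a := by
    intro i j a
    have : (i : R) • j = (j : R) • i := by ext; simp [mul_comm]
    have := congrArg (fun t => ((e t a : B) : R)) this
    simpa using this
  set x : R := (e ⟨i0, hi0⟩ ⟨a0, ha0⟩ : R) with hx
  have key : ∀ (i : I) (a : A), (i0 * a0) * (e i a : R) = x * (i * a) := by
    intro i a
    have h1 := hA1 (e i) ⟨a0, ha0⟩ a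
    have h2 := hI1 ⟨i0, hi0⟩ i ⟨a0, ha0⟩
    simp only at h1 h2
    rw [← hx] at h2
    linear_combination i0 * h1 + a * h2
  have hy : i0 * a0 ≠ 0 := mul_ne_zero hi00 ha00
  have hx0 : x ≠ 0 := by
    intro h0
    have : e ⟨i0, hi0⟩ = 0 := by
      ext a
      have := key ⟨i0, hi0⟩ a
      rw [h0, zero_mul] at this
      simpa using (mul_eq_zero.1 this).resolve_left hy
    have := e.map_eq_zero_iff.1 this
    exact hi00 (congrArg Subtype.val this)
  -- complement of A
  obtain ⟨C, hC⟩ : A ∣ Ideal.span {a0} :=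
    Ideal.dvd_iff_le.2 ((Ideal.span_singleton_le_iff_mem _).2 ha0)
  rw [← map_mul, ClassGroup.mk0_eq_mk0_iff]
  refine ⟨x, i0 * a0, hx0, hy, ?_⟩
  change Ideal.span {x} * (I * A) = Ideal.span {i0 * a0} * B
  apply le_antisymm
  · rw [Ideal.span_singleton_mul_le_iff]
    intro z hz
    induction hz using Submodule.mul_induction_on' with
    | mem_mul_mem i hi a ha =>
      rw [← key ⟨i, hi⟩ ⟨a, ha⟩]
      exact Ideal.mul_mem_mul (Ideal.mem_span_singleton_self _) (Subtype.prop _)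
    | add u _ v _ hu hv => rw [mul_add]; exact Ideal.add_mem _ hu hv
  · have step : Ideal.span {i0 * a0} * (C * B) ≤ Ideal.span {a0} * (Ideal.span {x} * I) := by
      rw [Ideal.span_singleton_mul_le_iff]
      intro w hw
      induction hw using Submodule.mul_induction_on' with
      | add u _ v _ hu hv => rw [mul_add]; exact Ideal.add_mem _ hu hv
      | mem_mul_mem z hz b hb =>
        have ex : ∀ a : A, ∃ t : R, (a : R) * z = a0 * t := by
          intro a
          have : (a : R) * z ∈ Ideal.span {a0} := hC ▸ Ideal.mul_mem_mul a.2 hz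
          exact (Ideal.mem_span_singleton.1 this)
        choose t ht using ex
        let g : A →ₗ[R] B :=
          { toFun := fun a => ⟨t a * b, B.mul_mem_left _ hb⟩
            map_add' := by
              intro u v
              ext
              have : t (u + v) = t u + t v := by
                apply mul_left_cancel₀ ha00
                rw [mul_add, ← ht, ← ht, ← ht]; simp; ring
              simp [this]; ring
            map_smul' := by
              intro r v
              ext
              have : t (r • v) = r * t v := by
                apply mul_left_cancel₀ ha00
                rw [mul_left_comm, ← ht, ← ht]; simp; ring
              simp [this]; ring }
        obtain ⟨i, hi⟩ := e.surjective g
        have h1 := key i ⟨a0, ha0⟩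
        rw [hi] at h1
        have h2 : (g ⟨a0, ha0⟩ : R) = t ⟨a0, ha0⟩ * b := rfl
        have h3 : z = t ⟨a0, ha0⟩ := mul_left_cancel₀ ha00 (ht ⟨a0, ha0⟩)
        rw [h2, ← h3] at h1
        have h4 : i0 * a0 * (z * b) = a0 * (x * i) := by rw [h1]; simp; ring
        rw [h4]
        exact Ideal.mul_mem_mul (Ideal.mem_span_singleton_self _)
          (Ideal.mul_mem_mul (Ideal.mem_span_singleton_self _) i.2)
    have step2 := Ideal.mul_mono_right (I := A) step
    have e1 : A * (Ideal.span {i0 * a0} * (C * B)) =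
        Ideal.span {a0} * (Ideal.span {i0 * a0} * B) := by rw [hC]; ring
    have e2 : A * (Ideal.span {a0} * (Ideal.span {x} * I)) =
        Ideal.span {a0} * (Ideal.span {x} * (I * A)) := by ring
    rw [e1, e2] at step2
    exact (Ideal.span_singleton_mul_right_mono ha00).1 step2

/-- The endomorphism `(r, x) ↦ (0, r i)`. -/
def tauMap {R : Type*} [CommRing R] (I : Ideal R) : I →ₗ[R] Module.End R (R × ↥I) where
  toFun i := (LinearMap.inr R R I).comp ((LinearMap.toSpanSingleton R I i).comp (LinearMap.fst R R I))
  map_add' := by intro a b; ext <;> simp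
  map_smul' := by intro a b; ext <;> simp

theorem tauMap_apply {R : Type*} [CommRing R] (I : Ideal R) (i : I) (m : R × ↥I) :
    tauMap I i m = (0, m.1 • i) := rfl

/-- The endomorphism `(r, x) ↦ (r, 0)`. -/
def projMap {R : Type*} [CommRing R] (I : Ideal R) : Module.End R (R × ↥I) :=
  (LinearMap.inl R R I).comp (LinearMap.fst R R I)

theorem projMap_apply {R : Type*} [CommRing R] (I : Ideal R) (m : R × ↥I) :
    projMap I m = (m.1, 0) := rfl

theorem corner_equiv {R : Type*} [CommRing R] (I I' : Ideal R)
    (φ : (Module.End R (R × ↥I)) ≃ₐ[R] (Module.End R (R × ↥I'))) :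
    Nonempty (I ≃ₗ[R] (LinearMap.range (φ (projMap I)) →ₗ[R] LinearMap.ker (φ (projMap I)))) := by
  set p := φ (projMap I) with hp
  have hpp : ∀ x, p (p x) = p x := by
    intro x
    have : p * p = p := by rw [hp, ← map_mul]; congr 1
    exact LinearMap.congr_fun this x
  have hker : ∀ i x, φ (tauMap I i) x ∈ LinearMap.ker p := by
    intro i x
    have : p * φ (tauMap I i) = 0 := by
      rw [hp, ← map_mul, ← map_zero φ]; congr 1
    exact LinearMap.congr_fun this x
  have hte : ∀ i x, φ (tauMap I i) (p x) = φ (tauMap I i) x := by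
    intro i x
    have : φ (tauMap I i) * p = φ (tauMap I i) := by
      rw [hp, ← map_mul]; congr 1
    exact LinearMap.congr_fun this x
  let F : I →ₗ[R] (LinearMap.range p →ₗ[R] LinearMap.ker p) :=
    { toFun := fun i => ((φ (tauMap I i)).comp (LinearMap.range p).subtype).codRestrict _
        (fun x => hker i x)
      map_add' := by intro a b; ext x : 2; simp; rfl
      map_smul' := by intro a b; ext x : 2; simp; rfl }
  have hF : ∀ i x, ((F i x : LinearMap.ker p) : R × ↥I') = φ (tauMap I i) x := fun _ _ => rfl
  refine ⟨LinearEquiv.ofBijective F ⟨?_, ?_⟩⟩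
  · refine (injective_iff_map_eq_zero F).2 ?_
    intro i hi
    have h0 : φ (tauMap I i) = 0 := by
      apply LinearMap.ext
      intro x
      rw [← hte, ← hF i ⟨p x, x, rfl⟩, hi]; rfl
    have h1 : tauMap I i = 0 := by simpa using h0
    have h2 := LinearMap.congr_fun h1 (1, 0)
    rw [tauMap_apply] at h2
    simpa using h2
  · intro g
    let T : Module.End R (R × ↥I') :=
      (LinearMap.ker p).subtype.comp (g.comp p.rangeRestrict)
    have hT : ∀ x, T x = g ⟨p x, x, rfl⟩ := fun _ => rfl
    let S := φ.symm T
    have hST : φ S = T := φ.apply_symm_apply T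
    have h1 : projMap I * S = 0 := by
      apply φ.injective
      rw [map_mul, hST, map_zero, ← hp]
      apply LinearMap.ext
      intro x
      exact (g ⟨p x, x, rfl⟩).2
    have h2 : S * projMap I = S := by
      apply φ.injective
      rw [map_mul, hST, ← hp]
      apply LinearMap.ext
      intro x
      change T (p x) = T x
      rw [hT, hT]
      congr 2
      exact Subtype.ext (hpp x)
    have h3 : tauMap I (S (1, 0)).2 = S := by
      apply LinearMap.ext
      intro x
      have k1 : S (projMap I x) = S x := LinearMap.congr_fun h2 x
      have k2 : projMap I (S x) = 0 := LinearMap.congr_fun h1 x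
      have k3 : (S x).1 = 0 := congrArg Prod.fst k2
      have k4 : projMap I x = x.1 • ((1 : R), (0 : I)) := by
        rw [projMap_apply]; ext <;> simp
      rw [tauMap_apply]
      refine Prod.ext k3.symm ?_
      rw [← k1, k4, map_smul]; rfl
    refine ⟨(S (1, 0)).2, ?_⟩
    apply LinearMap.ext
    rintro ⟨x, y, rfl⟩
    apply Subtype.ext
    rw [hF, h3, hST, hT]
    congr 2
    exact Subtype.ext (hpp _)

/-- Let `R` be a Dedekind domain whose ideal class group is 2-torsion.
Let `I` and `I'` be nonzero ideals of `R` whose classes in the ideal class group are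
distinct.  Then `End_R(R ⊕ I)` and `End_R(R ⊕ I')` are not isomorphic as `R`-algebras. -/
theorem end_not_iso_of_distinct_classes
    (R : Type*) [CommRing R] [IsDomain R] [IsDedekindDomain R]
    (htor : ∀ c : ClassGroup R, c ^ 2 = 1)
    (I I' : Ideal R) (hI : I ≠ 0) (hI' : I' ≠ 0)
    (hne : ClassGroup.mk0 ⟨I, mem_nonZeroDivisors_of_ne_zero hI⟩
        ≠ ClassGroup.mk0 ⟨I', mem_nonZeroDivisors_of_ne_zero hI'⟩) :
    IsEmpty ((Module.End R (R × ↥I)) ≃ₐ[R] (Module.End R (R × ↥I'))) := by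
  refine ⟨fun φ => hne ?_⟩
  have hpp : IsIdempotentElem (φ (projMap I)) := by
    change _ * _ = _
    rw [← map_mul]; congr 1
  obtain ⟨E⟩ := corner_equiv I I' φ
  have hc : IsCompl (LinearMap.range (φ (projMap I))) (LinearMap.ker (φ (projMap I))) :=
    LinearMap.IsIdempotentElem.isCompl hpp
  have hJ : LinearMap.range (φ (projMap I)) ≠ ⊥ := by
    intro h
    have h1 : projMap I = 0 := by simpa using LinearMap.range_eq_bot.1 h
    have h2 := congrArg Prod.fst (LinearMap.congr_fun h1 (1, 0))
    exact one_ne_zero (α := R) h2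
  have hJ' : LinearMap.ker (φ (projMap I)) ≠ ⊥ := by
    intro h
    obtain ⟨i, hi, hi0⟩ := Submodule.exists_mem_ne_zero_of_ne_bot hI
    have h1 : E ⟨i, hi⟩ = 0 := by
      apply LinearMap.ext
      intro x
      apply Subtype.ext
      exact (Submodule.mem_bot R).1 (h.le (E ⟨i, hi⟩ x).2)
    exact hi0 (congrArg Subtype.val (E.map_eq_zero_iff.1 h1))
  obtain ⟨A, B, hA, hB, ⟨eA⟩, ⟨eB⟩, hAB⟩ := steinitz_aux I' hI' _ _ hc hJ hJ'
  have h := hom_class_aux I A B hI hA hB (E.trans (LinearEquiv.arrowCongr eA eB))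
  rw [← hAB, ← h, mul_left_comm, ← pow_two, htor, mul_one]
end

section
/- Let R = ℝ[[t]] be the ring of formal power series over ℝ, let A be the R-subalgebra of Mat₆(R) consisting of all matrices whose (i,j) entry lies in tR whenever i ∈ {1,2,3,4} and j ∈ {5,6}, and set a₁ = diag(1, −1, 1, −1, t, t), a₂ = diag(1, −1, 1, 1, t, −t). For i = 1, 2 define σᵢ(x) = aᵢ⁻¹ xᵀ aᵢ, computed in Mat₆(ℝ((t))). Then each σᵢ maps A into A and restricts to an R-linear involution (anti-automorphism of order two) of A, and there is no R-algebra automorphism ψ of A such that ψ ∘ σ₁ = σ₂ ∘ ψ. -/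
open Matrix

noncomputable section

/-- `s : A → A` is an `R`-linear involution (anti-automorphism of order two) of the
`R`-algebra `A`. -/
def IsRingInvolutionOver (R A : Type*) [CommSemiring R] [Ring A] [Algebra R A]
    (s : A → A) : Prop :=
  (∀ (r : R) (x : A), s (r • x) = r • s x) ∧ (∀ x y : A, s (x + y) = s x + s y) ∧
    (∀ x y : A, s (x * y) = s y * s x) ∧ s 1 = 1 ∧ (∀ x : A, s (s x) = x)

/-- The hereditary order `A ⊆ Mat₆(ℝ[[t]])`: all matrices whose `(i,j)` entry is divisible
by `t` (i.e. lies in `t·ℝ[[t]]`) whenever `i ∈ {1,2,3,4}` and `j ∈ {5,6}` (here indexed by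
`i ∈ {0,1,2,3}` and `j ∈ {4,5}`). -/
def herOrder : Subalgebra (PowerSeries ℝ) (Matrix (Fin 6) (Fin 6) (PowerSeries ℝ)) where
  carrier := {x | ∀ i j : Fin 6, i.val ≤ 3 → 4 ≤ j.val → (PowerSeries.X : PowerSeries ℝ) ∣ x i j}
  mul_mem' := by
    intro x y hx hy i j hi hj
    rw [Matrix.mul_apply]
    refine Finset.dvd_sum fun k _ => ?_
    by_cases hk : (k : ℕ) ≤ 3
    · exact dvd_mul_of_dvd_right (hy k j hk hj) _
    · exact dvd_mul_of_dvd_left (hx i k hi (by omega)) _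
  add_mem' := by
    intro x y hx hy i j hi hj
    exact dvd_add (hx i j hi hj) (hy i j hi hj)
  one_mem' := by
    intro i j hi hj
    rw [Matrix.one_apply_ne (Fin.ne_of_val_ne (by omega))]
    exact dvd_zero _
  zero_mem' := by
    intro i j hi hj
    rw [Matrix.zero_apply]
    exact dvd_zero _
  algebraMap_mem' := by
    intro r i j hi hj
    rw [Matrix.algebraMap_matrix_apply, if_neg (Fin.ne_of_val_ne (by omega : i.val ≠ j.val))]
    exact dvd_zero _

/-- The element `t` of the field of Laurent series `ℝ((t))`. -/
def tL : LaurentSeries ℝ := (PowerSeries.X : PowerSeries ℝ)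

/-- The canonical embedding `Mat₆(ℝ[[t]]) → Mat₆(ℝ((t)))`. -/
def toF : Matrix (Fin 6) (Fin 6) (PowerSeries ℝ) →+* Matrix (Fin 6) (Fin 6) (LaurentSeries ℝ) :=
  (HahnSeries.ofPowerSeries ℤ ℝ).mapMatrix

/-- `a₁ = diag(1, −1, 1, −1, t, t)`, viewed in `Mat₆(ℝ((t)))`. -/
def a1F : Matrix (Fin 6) (Fin 6) (LaurentSeries ℝ) := diagonal ![1, -1, 1, -1, tL, tL]

/-- `a₂ = diag(1, −1, 1, 1, t, −t)`, viewed in `Mat₆(ℝ((t)))`. -/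
def a2F : Matrix (Fin 6) (Fin 6) (LaurentSeries ℝ) := diagonal ![1, -1, 1, 1, tL, -tL]

lemma toF_apply (x : Matrix (Fin 6) (Fin 6) (PowerSeries ℝ)) (i j : Fin 6) :
    toF x i j = HahnSeries.ofPowerSeries ℤ ℝ (x i j) := rfl

lemma toF_inj : Function.Injective toF := by
  intro x y h
  ext1 i j
  apply HahnSeries.ofPowerSeries_injective (Γ := ℤ) (R := ℝ)
  rw [← toF_apply, ← toF_apply, h]

lemma tL_ne : tL ≠ 0 := by
  unfold tL
  intro h
  have h2 : HahnSeries.ofPowerSeries ℤ ℝ PowerSeries.X = HahnSeries.ofPowerSeries ℤ ℝ 0 := by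
    rw [map_zero]; exact h
  exact PowerSeries.X_ne_zero (HahnSeries.ofPowerSeries_injective h2)

lemma mem_her (x : Matrix (Fin 6) (Fin 6) (PowerSeries ℝ)) :
    x ∈ herOrder ↔ ∀ i j : Fin 6, i.val ≤ 3 → 4 ≤ j.val → (PowerSeries.X : PowerSeries ℝ) ∣ x i j :=
  Iff.rfl

/-- Generic existence of the involution attached to a diagonal matrix. -/
lemma exists_invol (e : Fin 6 → PowerSeries ℝ) (he : ∀ i, e i * e i = 1)
    (d : Fin 6 → LaurentSeries ℝ)
    (hd : ∀ i, d i = HahnSeries.ofPowerSeries ℤ ℝ (e i) * (if i.val ≤ 3 then 1 else tL))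
    (a : Matrix (Fin 6) (Fin 6) (LaurentSeries ℝ)) (ha : a = diagonal d) :
    ∃ s : herOrder → herOrder,
      (∀ x : herOrder, toF (s x : Matrix (Fin 6) (Fin 6) (PowerSeries ℝ))
          = a⁻¹ * (toF (x : Matrix (Fin 6) (Fin 6) (PowerSeries ℝ)))ᵀ * a) ∧
      IsRingInvolutionOver (PowerSeries ℝ) herOrder s ∧
      (∀ (x : herOrder) (i j : Fin 6), d i * HahnSeries.ofPowerSeries ℤ ℝ ((s x).1 i j)
        = HahnSeries.ofPowerSeries ℤ ℝ (x.1 j i) * d j) := by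
  subst ha
  have hee : ∀ i, HahnSeries.ofPowerSeries ℤ ℝ (e i) * HahnSeries.ofPowerSeries ℤ ℝ (e i) = 1 := by
    intro i; rw [← map_mul, he, map_one]
  have hd0 : ∀ i, d i ≠ 0 := by
    intro i
    rw [hd]
    refine mul_ne_zero (left_ne_zero_of_mul (hee i ▸ one_ne_zero)) ?_
    split_ifs
    · exact one_ne_zero
    · exact tL_ne
  have hdu : IsUnit (diagonal d).det := by
    rw [det_diagonal, isUnit_iff_ne_zero]
    exact Finset.prod_ne_zero_iff.mpr fun i _ => hd0 i
  have ex : ∀ x : herOrder, ∃ y : herOrder, ∀ i j : Fin 6,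
      d i * HahnSeries.ofPowerSeries ℤ ℝ (y.1 i j) = HahnSeries.ofPowerSeries ℤ ℝ (x.1 j i) * d j := by
    intro x
    have key : ∀ i j : Fin 6, ∃ z : PowerSeries ℝ,
        (i.val ≤ 3 → 4 ≤ j.val → (PowerSeries.X : PowerSeries ℝ) ∣ z) ∧
        d i * HahnSeries.ofPowerSeries ℤ ℝ z = HahnSeries.ofPowerSeries ℤ ℝ (x.1 j i) * d j := by
      intro i j
      by_cases hi : i.val ≤ 3 <;> by_cases hj : j.val ≤ 3
      · refine ⟨e i * x.1 j i * e j, by omega, ?_⟩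
        rw [hd, hd, if_pos hi, if_pos hj, map_mul, map_mul]
        linear_combination (HahnSeries.ofPowerSeries ℤ ℝ (x.1 j i) * HahnSeries.ofPowerSeries ℤ ℝ (e j)) * hee i
      · refine ⟨PowerSeries.X * (e i * x.1 j i * e j), fun _ _ => dvd_mul_right _ _, ?_⟩
        rw [hd, hd, if_pos hi, if_neg hj, map_mul, map_mul, map_mul]
        change _ * (tL * _) = _
        linear_combination (tL * HahnSeries.ofPowerSeries ℤ ℝ (x.1 j i) * HahnSeries.ofPowerSeries ℤ ℝ (e j)) * hee i
      · obtain ⟨z, hz⟩ := (mem_her _).1 x.2 j i hj (by omega)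
        refine ⟨e i * z * e j, by omega, ?_⟩
        rw [hd, hd, if_neg hi, if_pos hj, hz, map_mul, map_mul, map_mul]
        change _ = (tL * _) * _
        linear_combination (tL * HahnSeries.ofPowerSeries ℤ ℝ z * HahnSeries.ofPowerSeries ℤ ℝ (e j)) * hee i
      · refine ⟨e i * x.1 j i * e j, by omega, ?_⟩
        rw [hd, hd, if_neg hi, if_neg hj, map_mul, map_mul]
        linear_combination (tL * HahnSeries.ofPowerSeries ℤ ℝ (x.1 j i) * HahnSeries.ofPowerSeries ℤ ℝ (e j)) * hee i
    choose z hz1 hz2 using key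
    exact ⟨⟨of z, fun i j hi hj => hz1 i j hi hj⟩, hz2⟩
  choose s hs using ex
  have inj : ∀ x y : herOrder, (∀ i j, d i * HahnSeries.ofPowerSeries ℤ ℝ (x.1 i j)
      = d i * HahnSeries.ofPowerSeries ℤ ℝ (y.1 i j)) → x = y := by
    intro x y h
    apply Subtype.ext
    ext1 i j
    exact HahnSeries.ofPowerSeries_injective (mul_left_cancel₀ (hd0 i) (h i j))
  refine ⟨s, ?_, ⟨?_, ?_, ?_, ?_, ?_⟩, hs⟩
  · intro x
    have h : diagonal d * toF (s x).1 = (toF x.1)ᵀ * diagonal d := by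
      ext1 i j
      rw [diagonal_mul, mul_diagonal, transpose_apply, toF_apply, toF_apply, hs]
    rw [mul_assoc, ← h, ← mul_assoc, nonsing_inv_mul _ hdu, one_mul]
  · intro r x
    apply inj
    intro i j
    rw [hs]
    change HahnSeries.ofPowerSeries ℤ ℝ (r * x.1 j i) * _ = _ * HahnSeries.ofPowerSeries ℤ ℝ (r * (s x).1 i j)
    rw [map_mul, map_mul]
    linear_combination - HahnSeries.ofPowerSeries ℤ ℝ r * hs x i j
  · intro x y
    apply inj
    intro i j
    rw [hs]
    change HahnSeries.ofPowerSeries ℤ ℝ (x.1 j i + y.1 j i) * _ = _ * HahnSeries.ofPowerSeries ℤ ℝ ((s x).1 i j + (s y).1 i j)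
    rw [map_add, map_add]
    linear_combination - hs x i j - hs y i j
  · intro x y
    apply inj
    intro i j
    rw [hs]
    change HahnSeries.ofPowerSeries ℤ ℝ ((x.1 * y.1) j i) * _ = _ * HahnSeries.ofPowerSeries ℤ ℝ (((s y).1 * (s x).1) i j)
    rw [mul_apply, mul_apply, map_sum, map_sum, Finset.sum_mul, Finset.mul_sum]
    refine Finset.sum_congr rfl fun k _ => ?_
    rw [map_mul, map_mul, ← mul_assoc, hs, mul_assoc _ (d k), hs]
    ring
  · apply inj
    intro i j
    rw [hs]
    change HahnSeries.ofPowerSeries ℤ ℝ ((1 : Matrix (Fin 6) (Fin 6) (PowerSeries ℝ)) j i) * _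
      = _ * HahnSeries.ofPowerSeries ℤ ℝ ((1 : Matrix (Fin 6) (Fin 6) (PowerSeries ℝ)) i j)
    by_cases h : i = j
    · subst h; simp
    · rw [one_apply_ne h, one_apply_ne (Ne.symm h)]; simp
  · intro x
    apply inj
    intro i j
    rw [hs]
    apply mul_left_cancel₀ (hd0 j)
    linear_combination (d j) * hs x j i

/-- The bottom right `2 × 2` block modulo `t`. -/
def rho : herOrder →+* Matrix (Fin 2) (Fin 2) ℝ where
  toFun x := of fun i j => PowerSeries.constantCoeff (x.1 (Fin.natAdd 4 i) (Fin.natAdd 4 j))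
  map_one' := by
    ext i j
    fin_cases i <;> fin_cases j <;> simp [one_apply]
  map_zero' := by
    ext i j
    simp
  map_add' x y := by
    ext i j
    simp
  map_mul' x y := by
    ext i j
    have h : ∀ k : Fin 4, PowerSeries.constantCoeff (y.1 (Fin.castAdd 2 k) (Fin.natAdd 4 j)) = 0 := by
      intro k
      rw [← PowerSeries.X_dvd_iff]
      exact (mem_her _).1 y.2 _ _ (by simp; omega) (by simp)
    change PowerSeries.constantCoeff ((x.1 * y.1) _ _) = _
    rw [mul_apply, map_sum, mul_apply]
    refine (Fin.sum_univ_add (a := 4) (b := 2) _).trans ?_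
    simp [h]

lemma rho_apply (x : herOrder) (i j : Fin 2) :
    rho x i j = PowerSeries.constantCoeff (x.1 (Fin.natAdd 4 i) (Fin.natAdd 4 j)) := rfl

lemma rho_smul_X (x : herOrder) : rho ((PowerSeries.X : PowerSeries ℝ) • x) = 0 := by
  ext i j
  rw [rho_apply]
  change PowerSeries.constantCoeff (PowerSeries.X * x.1 _ _) = _
  simp

lemma single_mem (i j : Fin 6) (h : ¬ (i.val ≤ 3 ∧ 4 ≤ j.val)) :
    (single i j 1 : Matrix (Fin 6) (Fin 6) (PowerSeries ℝ)) ∈ herOrder := by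
  intro a b ha hb
  rw [single_apply_of_ne]
  · exact dvd_zero _
  · rintro ⟨rfl, rfl⟩; exact h ⟨ha, hb⟩

/-- Matrix units of the top left block. -/
def E (i j : Fin 4) : herOrder :=
  ⟨single (Fin.castAdd 2 i) (Fin.castAdd 2 j) 1, single_mem _ _ (by simp)⟩

lemma E_mul (i j k : Fin 4) : E i j * E j k = E i k := by
  apply Subtype.ext
  change single _ _ _ * single _ _ _ = single _ _ _
  simp

lemma E_mul_ne (i j k l : Fin 4) (h : j ≠ k) : E i j * E k l = 0 := by
  apply Subtype.ext
  change single _ _ _ * single _ _ _ = 0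
  rw [single_mul_single_of_ne]
  intro h'
  exact h (Fin.castAdd_injective _ _ h')

lemma nil_two (M : Matrix (Fin 2) (Fin 2) ℝ) (h : M ^ 4 = 0) : M ^ 2 = 0 := by
  have hdet : M.det = 0 := by
    have : M.det ^ 4 = 0 := by rw [← det_pow, h, det_zero]
    exact pow_eq_zero_iff (by norm_num) |>.1 this
  have h2 : M ^ 2 = M.trace • M := by
    rw [det_fin_two] at hdet
    ext i j
    rw [pow_two, mul_apply, trace_fin_two, Fin.sum_univ_two, Matrix.smul_apply, smul_eq_mul]
    fin_cases i <;> fin_cases j <;> simp <;> first | linear_combination -hdet | ring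
  have h4 : M ^ 4 = M.trace ^ 3 • M := by
    have : M ^ 4 = M ^ 2 * M ^ 2 := by rw [← pow_add]
    rw [this, h2, smul_mul_smul_comm, ← pow_two M, h2, smul_smul]
    congr 1; ring
  rw [h4, smul_eq_zero] at h
  rcases h with h | h
  · rw [h2, pow_eq_zero_iff (by norm_num) |>.1 h, zero_smul]
  · rw [h]; simp

lemma phi_E (φ : herOrder →+* Matrix (Fin 2) (Fin 2) ℝ) (i j : Fin 4) : φ (E i j) = 0 := by
  have hN2 : (E 0 1 + E 1 2 + E 2 3) ^ 2 = E 0 2 + E 1 3 := by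
    simp only [pow_two, mul_add, add_mul]
    simp [E_mul, E_mul_ne]
  have hN4 : (E 0 1 + E 1 2 + E 2 3) ^ 4 = 0 := by
    have : (E 0 1 + E 1 2 + E 2 3) ^ 4 = (E 0 1 + E 1 2 + E 2 3) ^ 2 * (E 0 1 + E 1 2 + E 2 3) ^ 2 := by
      rw [← pow_add]
    rw [this, hN2]
    simp only [mul_add, add_mul]
    simp [E_mul_ne]
  have h := nil_two (φ (E 0 1 + E 1 2 + E 2 3)) (by rw [← map_pow, hN4, map_zero])
  rw [← map_pow, hN2] at h
  have e : E i j = E i 0 * (E 0 2 + E 1 3) * E 2 j := by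
    simp only [mul_add, add_mul]
    simp [E_mul, E_mul_ne]
  rw [e, map_mul, map_mul, h]
  simp

lemma phi_of_rho (φ : herOrder →+* Matrix (Fin 2) (Fin 2) ℝ)
    (hφ : ∀ x : herOrder, φ ((PowerSeries.X : PowerSeries ℝ) • x) = 0)
    (x : herOrder) (hx : rho x = 0) : φ x = 0 := by
  let e : herOrder := E 0 0 + E 1 1 + E 2 2 + E 3 3
  have he : φ e = 0 := by simp [e, phi_E]
  have hev : e.1 = diagonal ![1, 1, 1, 1, 0, 0] := by
    change single _ _ _ + single _ _ _ + single _ _ _ + single _ _ _ = _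
    ext1 i j
    fin_cases i <;> fin_cases j <;> simp [single_apply, diagonal_apply]
  have hf : (1 - e).1 = diagonal ![0, 0, 0, 0, 1, 1] := by
    change 1 - e.1 = _
    rw [hev, ← diagonal_one, diagonal_sub]
    congr 1
    ext1 i
    fin_cases i <;> simp
  have hdiv : ∀ i j, (PowerSeries.X : PowerSeries ℝ) ∣ ((1 - e) * x * (1 - e)).1 i j := by
    intro i j
    change _ ∣ ((1 - e).1 * x.1 * (1 - e).1) i j
    rw [hf, mul_diagonal, diagonal_mul]
    have h : ∀ a b : Fin 2, (PowerSeries.X : PowerSeries ℝ) ∣ x.1 (Fin.natAdd 4 a) (Fin.natAdd 4 b) := by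
      intro a b
      rw [PowerSeries.X_dvd_iff, ← rho_apply, hx]; rfl
    have h00 := h 0 0
    have h01 := h 0 1
    have h10 := h 1 0
    have h11 := h 1 1
    fin_cases i <;> fin_cases j <;> simp <;> assumption
  choose z hz using hdiv
  by_cases hzmem : (of fun i j => PowerSeries.X * z i j : Matrix (Fin 6) (Fin 6) (PowerSeries ℝ)) ∈ herOrder
  swap
  · exact absurd (fun i j _ _ => dvd_mul_right _ _) hzmem
  have hzz : ∀ i j : Fin 6, i.val ≤ 3 → z i j = 0 := by
    intro i j hi
    have := hz i j
    change ((1 - e).1 * x.1 * (1 - e).1) i j = _ at this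
    rw [hf, mul_diagonal, diagonal_mul] at this
    have h0 : (![0, 0, 0, 0, 1, 1] : Fin 6 → PowerSeries ℝ) i = 0 := by
      fin_cases i <;> simp_all
    rw [h0, zero_mul, zero_mul] at this
    exact (mul_eq_zero.1 this.symm).resolve_left PowerSeries.X_ne_zero
  let w : herOrder := ⟨of z, fun i j hi _ => by rw [of_apply, hzz i j hi]; exact dvd_zero _⟩
  have hw : (1 - e) * x * (1 - e) = (PowerSeries.X : PowerSeries ℝ) • w := by
    apply Subtype.ext
    ext1 i j
    exact hz i j
  have h := hφ w
  rw [← hw, map_mul, map_mul, map_sub, he, map_one, sub_zero, one_mul, mul_one] at h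
  exact h

/-- With `R = ℝ[[t]]`, `A = herOrder ⊆ Mat₆(R)`,
`a₁ = diag(1, −1, 1, −1, t, t)`, `a₂ = diag(1, −1, 1, 1, t, −t)` and
`σᵢ(x) = aᵢ⁻¹ xᵀ aᵢ` computed in `Mat₆(ℝ((t)))`:  each `σᵢ` maps `A` into `A` and
restricts to an `R`-linear involution `sᵢ` of `A`, and there is no `R`-algebra
automorphism `ψ` of `A` with `ψ ∘ σ₁ = σ₂ ∘ ψ`. -/
theorem no_automorphism_intertwines_orthogonal_involutions :
    ∃ s₁ s₂ : herOrder → herOrder,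
      (∀ x : herOrder,
        toF (s₁ x : Matrix (Fin 6) (Fin 6) (PowerSeries ℝ))
          = a1F⁻¹ * (toF (x : Matrix (Fin 6) (Fin 6) (PowerSeries ℝ)))ᵀ * a1F) ∧
      (∀ x : herOrder,
        toF (s₂ x : Matrix (Fin 6) (Fin 6) (PowerSeries ℝ))
          = a2F⁻¹ * (toF (x : Matrix (Fin 6) (Fin 6) (PowerSeries ℝ)))ᵀ * a2F) ∧
      IsRingInvolutionOver (PowerSeries ℝ) herOrder s₁ ∧
      IsRingInvolutionOver (PowerSeries ℝ) herOrder s₂ ∧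
      ¬ ∃ ψ : herOrder ≃ₐ[PowerSeries ℝ] herOrder,
          ∀ x : herOrder, ψ (s₁ x) = s₂ (ψ x) := by
  obtain ⟨s₁, h1, i1, k1⟩ := exists_invol ![1, -1, 1, -1, 1, 1]
    (by intro i; fin_cases i <;> simp) ![1, -1, 1, -1, tL, tL]
    (by intro i; fin_cases i <;> simp) a1F (by rfl)
  obtain ⟨s₂, h2, i2, k2⟩ := exists_invol ![1, -1, 1, 1, 1, -1]
    (by intro i; fin_cases i <;> simp) ![1, -1, 1, 1, tL, -tL]
    (by intro i; fin_cases i <;> simp) a2F (by rfl)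
  refine ⟨s₁, s₂, h1, h2, i1, i2, ?_⟩
  rintro ⟨ψ, hψ⟩
  let y : herOrder := ⟨single 4 4 1 + single 5 4 1,
    add_mem (single_mem 4 4 (by decide)) (single_mem 5 4 (by decide))⟩
  have hy0 : rho y ≠ 0 := by
    intro h
    have h' := congrFun (congrFun h 0) 0
    rw [rho_apply] at h'
    change PowerSeries.constantCoeff ((single 4 4 1 + single 5 4 1 :
      Matrix (Fin 6) (Fin 6) (PowerSeries ℝ)) 4 4) = 0 at h'
    simp [single_apply] at h'
  have hy : s₂ y * y = 0 := by
    apply Subtype.ext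
    ext1 i j
    change ((s₂ y).1 * (single 4 4 1 + single 5 4 1 : Matrix (Fin 6) (Fin 6) (PowerSeries ℝ)) :
      Matrix (Fin 6) (Fin 6) (PowerSeries ℝ)) i j = 0
    have hs : (s₂ y).1 i 4 + (s₂ y).1 i 5 = 0 := by
      have a4 := k2 y i 4
      have a5 := k2 y i 5
      have y4 : y.1 4 i = if i = 4 then 1 else 0 := by
        change (single 4 4 1 + single 5 4 1 : Matrix (Fin 6) (Fin 6) (PowerSeries ℝ)) 4 i = _
        simp [single_apply, eq_comm]
      have y5 : y.1 5 i = if i = 4 then 1 else 0 := by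
        change (single 4 4 1 + single 5 4 1 : Matrix (Fin 6) (Fin 6) (PowerSeries ℝ)) 5 i = _
        simp [single_apply, eq_comm]
      have hd : (![1, -1, 1, 1, tL, -tL] : Fin 6 → LaurentSeries ℝ) i ≠ 0 := by
        fin_cases i <;> simp [tL_ne]
      apply HahnSeries.ofPowerSeries_injective (Γ := ℤ) (R := ℝ)
      apply mul_left_cancel₀ hd
      rw [map_add, mul_add, a4, a5, y4, y5]
      simp
    rw [mul_add, Matrix.add_apply]
    by_cases hj : j = 4
    · subst hj; simpa using hs
    · rw [mul_single_apply_of_ne (hbj := hj), mul_single_apply_of_ne (hbj := hj), add_zero]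
  have hx : s₁ (ψ.symm y) * ψ.symm y = 0 := by
    apply ψ.injective
    rw [map_mul, hψ, ψ.apply_symm_apply, hy, map_zero]
  have hr : rho (s₁ (ψ.symm y)) = (rho (ψ.symm y))ᵀ := by
    ext i j
    rw [transpose_apply, rho_apply, rho_apply]
    congr 1
    apply HahnSeries.ofPowerSeries_injective (Γ := ℤ) (R := ℝ)
    have := k1 (ψ.symm y) (Fin.natAdd 4 i) (Fin.natAdd 4 j)
    have hd : ∀ i : Fin 2, (![1, -1, 1, -1, tL, tL] : Fin 6 → LaurentSeries ℝ) (Fin.natAdd 4 i) = tL := by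
      intro i; fin_cases i <;> rfl
    rw [hd, hd, mul_comm] at this
    exact mul_right_cancel₀ tL_ne this
  have hx0 : rho (ψ.symm y) = 0 := by
    have := congrArg rho hx
    rw [map_mul, hr, map_zero, ← conjTranspose_eq_transpose_of_trivial] at this
    exact conjTranspose_mul_self_eq_zero.1 this
  apply hy0
  have := phi_of_rho (rho.comp (ψ : herOrder →+* herOrder)) (fun x => by
    change rho (ψ (_ • x)) = 0
    rw [map_smul, rho_smul_X]) _ hx0
  simpa using this

end
end

section
/- Let R = ℝ[[t]] and let O = ℂ[[t]], the ring of formal power series over ℂ. Let A be the R-subalgebra of Mat₆(O) consisting of all matrices whose (i,j) entry lies in tO whenever i ∈ {1,2,3,4} and j ∈ {5,6}, and set a₁ = diag(1, −1, 1, −1, t, t), a₂ = diag(1, −1, 1, 1, t, −t) ∈ Mat₆(O). Let τ denote the conjugate-transpose involution of Mat₆ over O, τ(x)_{ij} = conj(x_{ji}), where conj applies complex conjugation to each coefficient of a power series. For i = 1, 2 define σᵢ(x) = aᵢ⁻¹ τ(x) aᵢ, computed in Mat₆(ℂ((t))). Then each σᵢ maps A into A and restricts to an R-linear involution of A, and there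 is no R-algebra automorphism ψ of A such that ψ ∘ σ₁ = σ₂ ∘ ψ. -/
open Matrix

noncomputable section

/-- The hereditary order `A ⊆ Mat₆(ℂ[[t]])`, an algebra over `R = ℝ[[t]]`: all matrices
whose `(i,j)` entry is divisible by `t` (i.e. lies in `t·ℂ[[t]]`) whenever
`i ∈ {1,2,3,4}` and `j ∈ {5,6}` (indexed here by `i ∈ {0,1,2,3}`, `j ∈ {4,5}`). -/
def herOrderC : Subalgebra (PowerSeries ℝ) (Matrix (Fin 6) (Fin 6) (PowerSeries ℂ)) where
  carrier := {x | ∀ i j : Fin 6, i.val ≤ 3 → 4 ≤ j.val → (PowerSeries.X : PowerSeries ℂ) ∣ x i j}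
  mul_mem' := by
    intro x y hx hy i j hi hj
    rw [Matrix.mul_apply]
    refine Finset.dvd_sum fun k _ => ?_
    by_cases hk : (k : ℕ) ≤ 3
    · exact dvd_mul_of_dvd_right (hy k j hk hj) _
    · exact dvd_mul_of_dvd_left (hx i k hi (by omega)) _
  add_mem' := by
    intro x y hx hy i j hi hj
    exact dvd_add (hx i j hi hj) (hy i j hi hj)
  one_mem' := by
    intro i j hi hj
    rw [Matrix.one_apply_ne (Fin.ne_of_val_ne (by omega))]
    exact dvd_zero _
  zero_mem' := by
    intro i j hi hj
    rw [Matrix.zero_apply]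
    exact dvd_zero _
  algebraMap_mem' := by
    intro r i j hi hj
    rw [Matrix.algebraMap_matrix_apply, if_neg (Fin.ne_of_val_ne (by omega : i.val ≠ j.val))]
    exact dvd_zero _

/-- The element `t` of the field of Laurent series `ℂ((t))`. -/
def tLC : LaurentSeries ℂ := (PowerSeries.X : PowerSeries ℂ)

/-- The canonical embedding `Mat₆(ℂ[[t]]) → Mat₆(ℂ((t)))`. -/
def toFC : Matrix (Fin 6) (Fin 6) (PowerSeries ℂ) →+* Matrix (Fin 6) (Fin 6) (LaurentSeries ℂ) :=
  (HahnSeries.ofPowerSeries ℤ ℂ).mapMatrix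

/-- The involution `τ` of `Mat₆(ℂ[[t]])`: conjugate-transpose, where `conj` applies
complex conjugation to each coefficient of a power series. -/
def tauC (x : Matrix (Fin 6) (Fin 6) (PowerSeries ℂ)) : Matrix (Fin 6) (Fin 6) (PowerSeries ℂ) :=
  (x.map (PowerSeries.map (starRingEnd ℂ)))ᵀ

/-- `a₁ = diag(1, −1, 1, −1, t, t)`, viewed in `Mat₆(ℂ((t)))`. -/
def a1FC : Matrix (Fin 6) (Fin 6) (LaurentSeries ℂ) := diagonal ![1, -1, 1, -1, tLC, tLC]

/-- `a₂ = diag(1, −1, 1, 1, t, −t)`, viewed in `Mat₆(ℂ((t)))`. -/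
def a2FC : Matrix (Fin 6) (Fin 6) (LaurentSeries ℂ) := diagonal ![1, -1, 1, 1, tLC, -tLC]

abbrev M6 := Matrix (Fin 6) (Fin 6) (PowerSeries ℂ)

abbrev cj : PowerSeries ℂ →+* PowerSeries ℂ := PowerSeries.map (starRingEnd ℂ)

lemma cj_cj (x : PowerSeries ℂ) : cj (cj x) = x := by
  ext n; simp

lemma cj_X : cj PowerSeries.X = PowerSeries.X := by simp

lemma tau_apply (x : M6) (i j : Fin 6) : tauC x i j = cj (x j i) := rfl

lemma tau_tau (x : M6) : tauC (tauC x) = x := by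
  ext1 i j; rw [tau_apply, tau_apply, cj_cj]

lemma tau_mul (x y : M6) : tauC (x * y) = tauC y * tauC x := by
  ext1 i j
  rw [tau_apply, Matrix.mul_apply, Matrix.mul_apply, map_sum]
  refine Finset.sum_congr rfl fun k _ => ?_
  rw [map_mul, tau_apply, tau_apply, mul_comm]

lemma tau_add (x y : M6) : tauC (x + y) = tauC x + tauC y := by
  ext1 i j
  simp [tau_apply]

lemma tau_one : tauC 1 = 1 := by
  ext1 i j
  rw [tau_apply, Matrix.one_apply, Matrix.one_apply]
  by_cases h : i = j
  · simp [h]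
  · simp [h, Ne.symm h]

lemma smul_entry (r : PowerSeries ℝ) (x : M6) (i j : Fin 6) :
    (r • x) i j = (PowerSeries.map (algebraMap ℝ ℂ) r) * x i j := by
  rw [Matrix.smul_apply, Algebra.smul_def]
  rfl

lemma tau_smul (r : PowerSeries ℝ) (x : M6) : tauC (r • x) = r • tauC x := by
  ext1 i j
  rw [tau_apply, smul_entry, smul_entry, map_mul, tau_apply]
  congr 1
  ext n
  simp

def wt (d : Fin 6 → PowerSeries ℂ) (i : Fin 6) : PowerSeries ℂ :=
  d i * (if i.val ≤ 3 then 1 else PowerSeries.X)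

lemma exists_entry (d : Fin 6 → PowerSeries ℂ) (hd : ∀ i, d i * d i = 1)
    (x : herOrderC) (i j : Fin 6) :
    ∃ y : PowerSeries ℂ, wt d i * y = cj (x.1 j i) * wt d j ∧
      (i.val ≤ 3 → 4 ≤ j.val → PowerSeries.X ∣ y) := by
  unfold wt
  by_cases hi : i.val ≤ 3 <;> by_cases hj : j.val ≤ 3
  · refine ⟨d i * d j * cj (x.1 j i), ?_, fun _ h => by omega⟩
    simp only [hi, hj, if_true]
    linear_combination (d j * cj (x.1 j i)) * hd i
  · refine ⟨d i * d j * cj (x.1 j i) * PowerSeries.X, ?_, fun _ _ => dvd_mul_left _ _⟩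
    simp only [hi, hj, if_true, if_false]
    linear_combination (d j * cj (x.1 j i) * PowerSeries.X) * hd i
  · obtain ⟨z, hz⟩ := x.2 j i hj (by omega)
    refine ⟨d i * d j * cj z, ?_, fun h => by omega⟩
    rw [hz, map_mul, cj_X]
    simp only [hi, hj, if_true, if_false]
    linear_combination (d j * cj z * PowerSeries.X) * hd i
  · refine ⟨d i * d j * cj (x.1 j i), ?_, fun h => by omega⟩
    simp only [hi, hj, if_false]
    linear_combination (d j * cj (x.1 j i) * PowerSeries.X) * hd i

lemma exists_inv (d : Fin 6 → PowerSeries ℂ) (hd : ∀ i, d i * d i = 1) :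
    ∃ s : herOrderC → herOrderC, ∀ x : herOrderC,
      diagonal (wt d) * (s x : M6) = tauC x * diagonal (wt d) := by
  choose y hy hy' using exists_entry d hd
  refine ⟨fun x => ⟨Matrix.of fun i j => y x i j, fun i j hi hj => hy' x i j hi hj⟩, fun x => ?_⟩
  ext1 i j
  rw [Matrix.diagonal_mul, Matrix.mul_diagonal, tau_apply]
  exact hy x i j

lemma wt_ne (d : Fin 6 → PowerSeries ℂ) (hd : ∀ i, d i * d i = 1) (i : Fin 6) : wt d i ≠ 0 := by
  have h : d i ≠ 0 := fun h => by have := hd i; simp [h] at this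
  unfold wt
  split_ifs
  · simpa using h
  · exact mul_ne_zero h PowerSeries.X_ne_zero

lemma diag_cancel (d : Fin 6 → PowerSeries ℂ) (hd : ∀ i, d i * d i = 1) (x y : M6)
    (h : diagonal (wt d) * x = diagonal (wt d) * y) : x = y := by
  ext1 i j
  have := congrFun (congrFun h i) j
  rw [Matrix.diagonal_mul, Matrix.diagonal_mul] at this
  exact mul_left_cancel₀ (wt_ne d hd i) this

lemma isInv (d : Fin 6 → PowerSeries ℂ) (hd : ∀ i, d i * d i = 1) (hc : ∀ i, cj (d i) = d i)
    (s : herOrderC → herOrderC)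
    (hs : ∀ x : herOrderC, diagonal (wt d) * (s x : M6) = tauC x * diagonal (wt d)) :
    IsRingInvolutionOver (PowerSeries ℝ) herOrderC s := by
  have hD : tauC (diagonal (wt d)) = diagonal (wt d) := by
    ext1 i j
    rw [tau_apply]
    by_cases h : i = j
    · subst h
      rw [Matrix.diagonal_apply_eq, wt, map_mul, hc]
      split_ifs
      · simp
      · rw [cj_X]
    · rw [Matrix.diagonal_apply_ne _ h, Matrix.diagonal_apply_ne _ (Ne.symm h), map_zero]
  refine ⟨fun r x => ?_, fun x y => ?_, fun x y => ?_, ?_, fun x => ?_⟩ <;>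
    apply Subtype.ext <;> apply diag_cancel d hd <;> rw [hs]
  · change tauC (r • (x : M6)) * _ = _ * (r • (s x : M6))
    rw [tau_smul, Matrix.mul_smul, hs, Matrix.smul_mul]
  · change tauC ((x : M6) + y) * _ = _ * ((s x : M6) + s y)
    rw [tau_add, Matrix.mul_add, hs, hs, Matrix.add_mul]
  · change tauC ((x : M6) * y) * _ = _ * ((s y : M6) * s x)
    rw [tau_mul, ← Matrix.mul_assoc, hs, Matrix.mul_assoc, Matrix.mul_assoc, hs]
  · change tauC (1 : M6) * _ = _ * (1 : M6)
    rw [tau_one, Matrix.one_mul, Matrix.mul_one]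
  · have := congrArg tauC (hs x)
    rw [tau_mul, tau_mul, hD, tau_tau] at this
    exact this

lemma toF_s15 (d : Fin 6 → PowerSeries ℂ) (hd : ∀ i, d i * d i = 1)
    (s : herOrderC → herOrderC)
    (hs : ∀ x : herOrderC, diagonal (wt d) * (s x : M6) = tauC x * diagonal (wt d))
    (a : Matrix (Fin 6) (Fin 6) (LaurentSeries ℂ)) (ha : a = toFC (diagonal (wt d)))
    (x : herOrderC) : toFC (s x : M6) = a⁻¹ * toFC (tauC (x : M6)) * a := by
  have hu : IsUnit a.det := by
    rw [ha, toFC, ← RingHom.map_det, Matrix.det_diagonal, isUnit_iff_ne_zero]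
    rw [Ne, map_eq_zero_iff _ HahnSeries.ofPowerSeries_injective]
    exact Finset.prod_ne_zero_iff.2 fun i _ => wt_ne d hd i
  have h := congrArg toFC (hs x)
  rw [map_mul, map_mul, ← ha] at h
  rw [Matrix.mul_assoc, ← h, ← Matrix.mul_assoc, Matrix.nonsing_inv_mul _ hu, Matrix.one_mul]

def d1 : Fin 6 → PowerSeries ℂ := ![1, -1, 1, -1, 1, 1]
def d2 : Fin 6 → PowerSeries ℂ := ![1, -1, 1, 1, 1, -1]

lemma ha1 : a1FC = toFC (diagonal (wt d1)) := by
  unfold a1FC toFC tLC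
  rw [RingHom.mapMatrix_apply, Matrix.diagonal_map (map_zero _)]
  congr 1
  funext i
  fin_cases i <;> simp [wt, d1]

lemma ha2 : a2FC = toFC (diagonal (wt d2)) := by
  unfold a2FC toFC tLC
  rw [RingHom.mapMatrix_apply, Matrix.diagonal_map (map_zero _)]
  congr 1
  funext i
  fin_cases i <;> simp [wt, d2]

/-- The residue map onto the lower right block. -/
def resMap : herOrderC →+* Matrix (Fin 2) (Fin 2) ℂ where
  toFun x := Matrix.of fun i j =>
    PowerSeries.constantCoeff ((x : M6) (Fin.natAdd 4 i) (Fin.natAdd 4 j))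
  map_one' := by
    ext i j
    fin_cases i <;> fin_cases j <;> simp [Matrix.one_apply]
  map_zero' := by
    ext i j
    simp
  map_add' x y := by
    ext i j
    simp
  map_mul' x y := by
    ext i j
    have key : ∀ k : Fin 4, PowerSeries.constantCoeff
        ((y : M6) (Fin.castAdd 2 k) (Fin.natAdd 4 j)) = 0 := by
      intro k
      rw [← PowerSeries.X_dvd_iff]
      exact y.2 _ _ (by simp; omega) (by simp)
    rw [Matrix.of_apply]
    change PowerSeries.constantCoeff (((x : M6) * (y : M6)) _ _) = _
    rw [Matrix.mul_apply, Matrix.mul_apply, map_sum]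
    refine (Fin.sum_univ_add (a := 4) (b := 2) fun k : Fin (4 + 2) => PowerSeries.constantCoeff
      ((x : M6) (Fin.natAdd 4 i) k * (y : M6) k (Fin.natAdd 4 j))).trans ?_
    simp only [map_mul, key, mul_zero, Finset.sum_const_zero, zero_add]
    rfl

lemma res_apply (x : herOrderC) (i j : Fin 2) : resMap x i j =
    PowerSeries.constantCoeff ((x : M6) (Fin.natAdd 4 i) (Fin.natAdd 4 j)) := rfl

lemma nil2 (M : Matrix (Fin 2) (Fin 2) ℂ) (h : M * M * M = 0) : M * M = 0 := by
  have hdet : M.det = 0 := by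
    have := congrArg Matrix.det h
    simpa [Matrix.det_mul] using this
  have h2 : M * M = M.trace • M := by
    rw [Matrix.det_fin_two] at hdet
    ext i j
    fin_cases i <;> fin_cases j <;>
      simp [Matrix.mul_apply, Fin.sum_univ_two, Matrix.trace_fin_two] <;>
      first | linear_combination -hdet | ring
  rw [h2, Matrix.smul_mul, h2, smul_smul] at h
  rw [h2]
  rcases smul_eq_zero.1 h with h | h
  · rw [mul_self_eq_zero.1 h, zero_smul]
  · rw [h, smul_zero]

def unitA (i j : Fin 6) (h : 4 ≤ j.val → 4 ≤ i.val) : herOrderC :=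
  ⟨Matrix.single i j 1, by
    intro k l hk hl
    rw [Matrix.single_apply]
    split_ifs with hh
    · obtain ⟨rfl, rfl⟩ := hh
      have := h hl
      omega
    · exact dvd_zero _⟩

lemma unit_mul (i j k : Fin 6) (h h' h'') : unitA i j h * unitA j k h' = unitA i k h'' := by
  apply Subtype.ext
  change Matrix.single i j 1 * Matrix.single j k 1 = Matrix.single i k 1
  simp

lemma unit_mul_ne (i j k l : Fin 6) (h h') (hne : j ≠ k) : unitA i j h * unitA k l h' = 0 := by
  apply Subtype.ext
  change Matrix.single i j 1 * Matrix.single k l 1 = 0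
  simp [hne]

lemma res_unit (c : herOrderC →+* Matrix (Fin 2) (Fin 2) ℂ) (i : Fin 6) (hi : i.val ≤ 3) :
    c (unitA i i (by omega)) = 0 := by
  have hN : (unitA 0 1 (by simp) + unitA 1 2 (by simp)) * (unitA 0 1 (by simp) + unitA 1 2 (by simp))
      = unitA 0 2 (by simp) := by
    rw [add_mul, mul_add, mul_add, unit_mul 0 1 2 _ _ (by simp), unit_mul_ne 0 1 0 1 _ _ (by decide),
      unit_mul_ne 1 2 0 1 _ _ (by decide), unit_mul_ne 1 2 1 2 _ _ (by decide)]
    simp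
  have hN3 : unitA 0 2 (by simp) * (unitA 0 1 (by simp) + unitA 1 2 (by simp)) = 0 := by
    rw [mul_add, unit_mul_ne 0 2 0 1 _ _ (by decide), unit_mul_ne 0 2 1 2 _ _ (by decide), add_zero]
  have h02 : c (unitA 0 2 (by simp)) = 0 := by
    rw [← hN, map_mul]
    apply nil2
    rw [← map_mul, ← map_mul, hN, hN3, map_zero]
  rw [← unit_mul i 0 i (by simp) (by omega), ← unit_mul 0 2 i (by simp) (by omega), map_mul, map_mul,
    h02, zero_mul, mul_zero]

lemma ker_pres (ψ : herOrderC ≃ₐ[PowerSeries ℝ] herOrderC) (x : herOrderC) (hx : resMap x = 0) :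
    resMap (ψ x) = 0 := by
  let c : herOrderC →+* Matrix (Fin 2) (Fin 2) ℂ := resMap.comp (ψ : herOrderC →+* herOrderC)
  let P : herOrderC := unitA 0 0 (by simp) + unitA 1 1 (by simp) + unitA 2 2 (by simp)
    + unitA 3 3 (by simp)
  have hP : c P = 0 := by
    simp only [P, map_add]
    rw [res_unit c 0 (by simp), res_unit c 1 (by simp), res_unit c 2 (by simp),
      res_unit c 3 (by simp)]
    simp
  have hPd : (P : M6) = diagonal fun i => if i.val ≤ 3 then 1 else 0 := by
    change Matrix.single 0 0 1 + Matrix.single 1 1 1 + Matrix.single 2 2 1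
      + Matrix.single 3 3 1 = _
    ext1 i j
    fin_cases i <;> fin_cases j <;> simp [Matrix.single_apply]
  have hdiv : ∀ i j : Fin 6, ∃ y : PowerSeries ℂ, 4 ≤ i.val → 4 ≤ j.val →
      (x : M6) i j = PowerSeries.X * y := by
    intro i j
    by_cases h : 4 ≤ i.val ∧ 4 ≤ j.val
    · have : (PowerSeries.X : PowerSeries ℂ) ∣ (x : M6) i j := by
        rw [PowerSeries.X_dvd_iff]
        have := congrFun (congrFun hx ⟨i.val - 4, by omega⟩) ⟨j.val - 4, by omega⟩
        rw [res_apply, Matrix.zero_apply] at this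
        convert this using 3 <;> (apply Fin.ext; simp; omega)
      obtain ⟨y, hy⟩ := this
      exact ⟨y, fun _ _ => hy⟩
    · exact ⟨0, fun h1 h2 => absurd ⟨h1, h2⟩ h⟩
  choose y hy using hdiv
  let Y : herOrderC := ⟨Matrix.of fun i j => if 4 ≤ i.val ∧ 4 ≤ j.val then y i j else 0, by
    intro i j hi hj
    rw [Matrix.of_apply, if_neg (by omega)]
    exact dvd_zero _⟩
  have hxe : x = P * x + (1 - P) * x * P + (PowerSeries.X : PowerSeries ℝ) • Y := by
    apply Subtype.ext
    change (x : M6) = (P : M6) * x + (1 - (P : M6)) * x * P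
      + (PowerSeries.X : PowerSeries ℝ) • (Y : M6)
    rw [sub_mul, one_mul, sub_mul, hPd]
    ext1 i j
    rw [Matrix.add_apply, Matrix.add_apply, Matrix.sub_apply, smul_entry, Matrix.mul_diagonal,
      Matrix.mul_diagonal, Matrix.diagonal_mul]
    by_cases hi : i.val ≤ 3 <;> by_cases hj : j.val ≤ 3
    · have h1 : ¬ 4 ≤ i.val := by omega
      simp [hi, hj, Y, h1]
    · have h1 : ¬ 4 ≤ i.val := by omega
      simp [hi, Y, h1]
    · have h1 : ¬ 4 ≤ j.val := by omega
      simp [hi, hj, Y, h1]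
    · have h := hy i j (by omega) (by omega)
      have h1 : 4 ≤ i.val := by omega
      have h2 : 4 ≤ j.val := by omega
      simp [hi, hj, Y, h, h1, h2]
  have hcY : c ((PowerSeries.X : PowerSeries ℝ) • Y) = 0 := by
    change resMap (ψ _) = 0
    rw [map_smul]
    ext i j
    rw [res_apply]
    change PowerSeries.constantCoeff (((PowerSeries.X : PowerSeries ℝ) • (ψ Y : M6)) _ _) = 0
    rw [smul_entry]
    simp
  change c x = 0
  rw [hxe, map_add, map_add, hcY, map_mul, map_mul, hP]
  simp

/-- With `R = ℝ[[t]]`, `O = ℂ[[t]]`, `A = herOrderC ⊆ Mat₆(O)`,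
`a₁ = diag(1, −1, 1, −1, t, t)`, `a₂ = diag(1, −1, 1, 1, t, −t)`, `τ` the
conjugate-transpose involution, and `σᵢ(x) = aᵢ⁻¹ τ(x) aᵢ` computed in `Mat₆(ℂ((t)))`:
each `σᵢ` maps `A` into `A` and restricts to an `R`-linear involution `sᵢ` of `A`, and
there is no `R`-algebra automorphism `ψ` of `A` with `ψ ∘ σ₁ = σ₂ ∘ ψ`. -/
theorem no_automorphism_intertwines_unitary_involutions :
    ∃ s₁ s₂ : herOrderC → herOrderC,
      (∀ x : herOrderC,
        toFC (s₁ x : Matrix (Fin 6) (Fin 6) (PowerSeries ℂ))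
          = a1FC⁻¹ * toFC (tauC (x : Matrix (Fin 6) (Fin 6) (PowerSeries ℂ))) * a1FC) ∧
      (∀ x : herOrderC,
        toFC (s₂ x : Matrix (Fin 6) (Fin 6) (PowerSeries ℂ))
          = a2FC⁻¹ * toFC (tauC (x : Matrix (Fin 6) (Fin 6) (PowerSeries ℂ))) * a2FC) ∧
      IsRingInvolutionOver (PowerSeries ℝ) herOrderC s₁ ∧
      IsRingInvolutionOver (PowerSeries ℝ) herOrderC s₂ ∧
      ¬ ∃ ψ : herOrderC ≃ₐ[PowerSeries ℝ] herOrderC,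
          ∀ x : herOrderC, ψ (s₁ x) = s₂ (ψ x) := by
  have hd1 : ∀ i, d1 i * d1 i = 1 := by intro i; fin_cases i <;> simp [d1]
  have hd2 : ∀ i, d2 i * d2 i = 1 := by intro i; fin_cases i <;> simp [d2]
  have hc1 : ∀ i, cj (d1 i) = d1 i := by intro i; fin_cases i <;> simp [d1]
  have hc2 : ∀ i, cj (d2 i) = d2 i := by intro i; fin_cases i <;> simp [d2]
  obtain ⟨s₁, hs₁⟩ := exists_inv d1 hd1
  obtain ⟨s₂, hs₂⟩ := exists_inv d2 hd2
  refine ⟨s₁, s₂, toF_s15 d1 hd1 s₁ hs₁ _ ha1, toF_s15 d2 hd2 s₂ hs₂ _ ha2, isInv d1 hd1 hc1 s₁ hs₁,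
    isInv d2 hd2 hc2 s₂ hs₂, ?_⟩
  rintro ⟨ψ, hψ⟩
  let e : herOrderC := unitA 4 4 (by simp) + unitA 5 4 (by simp)
  have heM : (e : M6) = Matrix.single 4 4 1 + Matrix.single 5 4 1 := rfl
  have he : s₂ e * e = 0 := by
    apply Subtype.ext
    apply diag_cancel d2 hd2
    change _ * ((s₂ e : M6) * (e : M6)) = _ * (0 : M6)
    rw [← Matrix.mul_assoc, hs₂, Matrix.mul_zero, heM]
    ext1 i j
    rw [Matrix.mul_apply, Matrix.zero_apply]
    simp only [Matrix.mul_diagonal, tau_apply, Fin.sum_univ_six, Matrix.add_apply,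
      Matrix.single_apply]
    by_cases hi : 4 = i <;> by_cases hj : 4 = j <;> first | subst hi | skip
    all_goals first | subst hj | skip
    all_goals simp [*, wt, d2]
  obtain ⟨f, hf⟩ := ψ.surjective e
  have hff : s₁ f * f = 0 := by
    apply ψ.injective
    rw [map_mul, hψ, hf, he, map_zero]
  have hstar : resMap (s₁ f) = (resMap f)ᴴ := by
    ext i j
    have h := congrFun (congrFun (hs₁ f) (Fin.natAdd 4 i)) (Fin.natAdd 4 j)
    have hw : ∀ k : Fin 2, wt d1 (Fin.natAdd 4 k) = PowerSeries.X := by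
      intro k; fin_cases k <;> simp [wt, d1]
    rw [Matrix.diagonal_mul, Matrix.mul_diagonal, hw, hw, mul_comm] at h
    have h' := mul_right_cancel₀ PowerSeries.X_ne_zero h
    rw [res_apply, h', Matrix.conjTranspose_apply, res_apply, tau_apply]
    rw [← PowerSeries.coeff_zero_eq_constantCoeff_apply,
      ← PowerSeries.coeff_zero_eq_constantCoeff_apply, PowerSeries.coeff_map]
    rfl
  have hf0 : resMap f = 0 := by
    have := congrArg resMap hff
    rw [map_mul, hstar, map_zero] at this
    open scoped ComplexOrder in
    exact Matrix.conjTranspose_mul_self_eq_zero.1 this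
  have h0 := ker_pres ψ f hf0
  rw [hf] at h0
  have := congrFun (congrFun h0 0) 0
  rw [res_apply, heM] at this
  simp [Matrix.single_apply] at this


end
end
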